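/- arXiv:2604.25872 — 3 statements merged into one kernel-verified Lean document; each statement's English description precedes it below -/
import Mathlib

section
/- Assume the ground truth reward r_G satisfies the reward structure assumption, the initial parameters θ_0 satisfy the initial policy assumption (general-features case), the feature vectors satisfy the positive-inner-product feature assumption, and ‖φ(y_med)‖² < s < ‖φ(y_⋆)‖² < 100‖φ(y_med)‖². Let r_P be identical to r_G except r_P(y_med) ≤ min_{y∈Y_bad} r_G(y). If θ_t is the gradient flow maximizing V_P and s > [π_{θ_0}(y_⋆) A_P(y_⋆; θ_0) ‖φ(y_⋆)‖² − π_{θ_0}(y_med) A_P(y_med; θ_0) ‖φ(y_med)‖²] / [π_{θ_0}(y_⋆) A_P(y_⋆; θ_0) − π_{θ_0}(y_med) A_P(y_med; θ_0)], then V_G(θ_t) < r_G(y_⋆) − (r_G(y_⋆) − r_G(y_med)) · π_{θ_0}(y_med) for all t ≥ 0. -/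
open scoped BigOperators RealInnerProductSpace

noncomputable def policy {Y : Type*} [Fintype Y] {D : ℕ}
    (φ : Y → EuclideanSpace ℝ (Fin D)) (θ : EuclideanSpace ℝ (Fin D)) (y : Y) : ℝ :=
  Real.exp ⟪φ y, θ⟫ / ∑ z, Real.exp ⟪φ z, θ⟫

noncomputable def expReward {Y : Type*} [Fintype Y] {D : ℕ}
    (φ : Y → EuclideanSpace ℝ (Fin D)) (r : Y → ℝ) (θ : EuclideanSpace ℝ (Fin D)) : ℝ :=
  ∑ y, policy φ θ y * r y

theorem part_pos {Y : Type*} [Fintype Y] {D : ℕ} (y0 : Y)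
    (φ : Y → EuclideanSpace ℝ (Fin D)) (θ : EuclideanSpace ℝ (Fin D)) :
    0 < ∑ z, Real.exp ⟪φ z, θ⟫ :=
  Finset.sum_pos (fun _ _ => Real.exp_pos _) ⟨y0, Finset.mem_univ _⟩

theorem policy_pos {Y : Type*} [Fintype Y] {D : ℕ}
    (φ : Y → EuclideanSpace ℝ (Fin D)) (θ : EuclideanSpace ℝ (Fin D)) (y : Y) :
    0 < policy φ θ y := div_pos (Real.exp_pos _) (part_pos y φ θ)

theorem policy_sum {Y : Type*} [Fintype Y] {D : ℕ} (y0 : Y)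
    (φ : Y → EuclideanSpace ℝ (Fin D)) (θ : EuclideanSpace ℝ (Fin D)) :
    ∑ y, policy φ θ y = 1 := by
  unfold policy
  rw [← Finset.sum_div, div_self (part_pos y0 φ θ).ne']

theorem expReward_diff {Y : Type*} [Fintype Y] {D : ℕ} (y0 : Y)
    (φ : Y → EuclideanSpace ℝ (Fin D)) (r : Y → ℝ) (θ : EuclideanSpace ℝ (Fin D)) :
    DifferentiableAt ℝ (expReward φ r) θ := by
  unfold expReward policy
  have h := (part_pos y0 φ θ).ne'
  have hi : ∀ z, DifferentiableAt ℝ (fun θ => Real.exp ⟪φ z, θ⟫) θ := fun z =>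
    ((differentiableAt_const _).inner ℝ differentiableAt_id).exp
  have hZ : DifferentiableAt ℝ (fun θ => ∑ z, Real.exp ⟪φ z, θ⟫) θ :=
    DifferentiableAt.fun_sum fun z _ => hi z
  refine DifferentiableAt.fun_sum fun z _ => ?_
  simp_rw [div_eq_mul_inv]
  have hd := (hi z).fun_mul (hZ.fun_inv h)
  exact hd.mul_const (r z)

theorem expReward_curve {Y : Type*} [Fintype Y] {D : ℕ} (y0 : Y)
    (φ : Y → EuclideanSpace ℝ (Fin D)) (r : Y → ℝ) (γ : ℝ → EuclideanSpace ℝ (Fin D))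
    (v : EuclideanSpace ℝ (Fin D)) (t : ℝ) (hγ : HasDerivAt γ v t) :
    HasDerivAt (fun u => expReward φ r (γ u))
      (∑ y, policy φ (γ t) y * (r y - expReward φ r (γ t)) * ⟪φ y, v⟫) t := by
  have h := (part_pos y0 φ (γ t)).ne'
  have hi : ∀ z, HasDerivAt (fun u => Real.exp ⟪φ z, γ u⟫)
      (Real.exp ⟪φ z, γ t⟫ * ⟪φ z, v⟫) t := fun z => by
    have := ((hasDerivAt_const t (φ z)).inner ℝ hγ).exp
    simpa using this
  have hZ := HasDerivAt.fun_sum (u := Finset.univ) fun z _ => hi z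
  have hN := HasDerivAt.fun_sum (u := Finset.univ) fun z _ => (hi z).mul_const (r z)
  have hq := hN.fun_div hZ h
  have e : ∀ θ, expReward φ r θ
      = (∑ z, Real.exp ⟪φ z, θ⟫ * r z) / ∑ z, Real.exp ⟪φ z, θ⟫ := by
    intro θ
    unfold expReward policy
    rw [Finset.sum_div]
    exact Finset.sum_congr rfl fun y _ => by ring
  simp_rw [e]
  refine hq.congr_deriv ?_
  have e2 : ∀ y, policy φ (γ t) y = Real.exp ⟪φ y, γ t⟫ / ∑ z, Real.exp ⟪φ z, γ t⟫ :=
    fun y => rfl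
  simp_rw [e2]
  generalize (∑ z, Real.exp ⟪φ z, γ t⟫ * r z) = N at *
  generalize (∑ z, Real.exp ⟪φ z, γ t⟫) = Z at *
  rw [Finset.sum_mul, Finset.mul_sum, ← Finset.sum_sub_distrib, Finset.sum_div]
  refine Finset.sum_congr rfl fun y _ => ?_
  field_simp

theorem grad_inner {Y : Type*} [Fintype Y] {D : ℕ} (y0 : Y)
    (φ : Y → EuclideanSpace ℝ (Fin D)) (r : Y → ℝ) (θ v : EuclideanSpace ℝ (Fin D)) :
    ⟪gradient (expReward φ r) θ, v⟫ =
      ∑ y, policy φ θ y * (r y - expReward φ r θ) * ⟪φ y, v⟫ := by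
  have hγ : HasDerivAt (fun u : ℝ => θ + u • v) v 0 := by
    simpa using ((hasDerivAt_id (0:ℝ)).smul_const v).const_add θ
  have h1 := expReward_curve y0 φ r _ v 0 hγ
  have hg := (expReward_diff y0 φ r θ).hasGradientAt.hasFDerivAt
  have hg' : HasFDerivAt (expReward φ r)
      (InnerProductSpace.toDual ℝ _ (gradient (expReward φ r) θ)) (θ + (0:ℝ) • v) := by
    simpa using hg
  have h2 := hg'.comp_hasDerivAt (0:ℝ) hγ
  have := h2.unique h1
  simpa using this

theorem sum_split {Y : Type*} [Fintype Y] (ystar ymed : Y) (Ybad : Finset Y)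
    (hsm : ystar ≠ ymed) (hsb : ystar ∉ Ybad) (hmb : ymed ∉ Ybad)
    (hcover : ∀ y : Y, y = ystar ∨ y = ymed ∨ y ∈ Ybad) (f : Y → ℝ) :
    ∑ y, f y = f ystar + f ymed + ∑ y ∈ Ybad, f y := by
  classical
  have : (Finset.univ : Finset Y) = insert ystar (insert ymed Ybad) := by
    ext y; simpa using hcover y
  rw [this, Finset.sum_insert (by simp [hsm, hsb]), Finset.sum_insert hmb, add_assoc]

/-- Scalar core: `h = ρ (R - V) / (V - m)` stays below its initial value, so `ρ` decreases. -/
theorem scalar_core (w V w' V' K : ℝ → ℝ) (R m c : ℝ)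
    (hw : ∀ t, 0 ≤ t → HasDerivAt w (w' t) t) (hV : ∀ t, 0 ≤ t → HasDerivAt V (V' t) t)
    (hV' : ∀ t, 0 ≤ t → 0 ≤ V' t) (hR : ∀ t, 0 ≤ t → V t < R) (hm : ∀ t, 0 ≤ t → m < V t)
    (hK : ∀ t, 0 ≤ t → 0 < K t)
    (hww : ∀ t, 0 ≤ t → w' t = K t * (Real.exp (w t) * ((R - V t) / (V t - m)) - c))
    (h0 : Real.exp (w 0) * ((R - V 0) / (V 0 - m)) < c) :
    ∀ t, 0 ≤ t → w t ≤ w 0 := by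
  set h : ℝ → ℝ := fun t => Real.exp (w t) * ((R - V t) / (V t - m)) with hh
  set h' : ℝ → ℝ := fun t => Real.exp (w t) * w' t * ((R - V t) / (V t - m))
    + Real.exp (w t) * (((-V' t) * (V t - m) - (R - V t) * V' t) / (V t - m) ^ 2) with hh'
  have hd : ∀ t, 0 ≤ t → HasDerivAt h (h' t) t := fun t ht =>
    (hw t ht).exp.mul (((hV t ht).const_sub R).div ((hV t ht).sub_const m)
      (sub_pos.2 (hm t ht)).ne')
  have hle : ∀ t, 0 ≤ t → h t ≤ h 0 := by
    intro T hT
    refine image_le_of_deriv_right_lt_deriv_boundary (f := h) (f' := h') (a := 0) (b := T)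
      (B := fun _ => h 0) (B' := fun _ => 0)
      (fun t ht => (hd t ht.1).continuousAt.continuousWithinAt)
      (fun t ht => (hd t ht.1).hasDerivWithinAt) le_rfl
      (fun t => hasDerivAt_const _ _) ?_ ⟨hT, le_rfl⟩
    intro t ht heq
    have ht0 := ht.1
    have a1 := sub_pos.2 (hm t ht0)
    have a2 := sub_pos.2 (hR t ht0)
    have a3 := Real.exp_pos (w t)
    have a4 := hV' t ht0
    have b1 : w' t < 0 := by
      rw [hww t ht0]
      have : Real.exp (w t) * ((R - V t) / (V t - m)) < c := by
        have e : h t = h 0 := heq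
        exact lt_of_eq_of_lt e h0
      exact mul_neg_of_pos_of_neg (hK t ht0) (by linarith)
    have b2 : Real.exp (w t) * w' t * ((R - V t) / (V t - m)) < 0 :=
      mul_neg_of_neg_of_pos (mul_neg_of_pos_of_neg a3 b1) (div_pos a2 a1)
    have b3 : ((-V' t) * (V t - m) - (R - V t) * V' t) / (V t - m) ^ 2 ≤ 0 :=
      div_nonpos_of_nonpos_of_nonneg (by nlinarith [mul_nonneg a4 a1.le, mul_nonneg a4 a2.le])
        (sq_nonneg _)
    have b4 := mul_nonpos_of_nonneg_of_nonpos a3.le b3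
    simp only [hh']
    linarith
  intro T hT
  refine image_le_of_deriv_right_le_deriv_boundary (f := w) (f' := w') (a := 0) (b := T)
      (B := fun _ => w 0) (B' := fun _ => 0)
      (fun t ht => (hw t ht.1).continuousAt.continuousWithinAt)
      (fun t ht => (hw t ht.1).hasDerivWithinAt) le_rfl continuousOn_const
      (fun t _ => hasDerivWithinAt_const _ _ _) ?_ ⟨hT, le_rfl⟩
  intro t ht
  rw [hww t ht.1]
  have := hle t ht.1
  exact mul_nonpos_of_nonneg_of_nonpos (hK t ht.1).le (by simp only [hh] at this; linarith)

set_option maxHeartbeats 2000000 in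
theorem pos_inner_stuck {Y : Type*} [Fintype Y] {D : ℕ}
    (φ : Y → EuclideanSpace ℝ (Fin D)) (hφ : ∀ y, φ y ≠ 0)
    (rG : Y → ℝ) (hrG : ∀ y, rG y ∈ Set.Icc (-1 : ℝ) 1)
    (ystar ymed ybad : Y) (Ybad : Finset Y) (hybad : ybad ∈ Ybad)
    (hsm : ystar ≠ ymed) (hsb : ystar ∉ Ybad) (hmb : ymed ∉ Ybad)
    (hcover : ∀ y : Y, y = ystar ∨ y = ymed ∨ y ∈ Ybad)
    (hr1 : rG ymed < rG ystar) (hr2 : 0 < rG ymed)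
    (hr3 : ∀ y ∈ Ybad, rG y ≤ 0)
    (hr4 : ∀ y ∈ Ybad, rG y = rG ybad)
    (Δ1 Δ2 : ℝ) (hΔ1 : Δ1 = rG ystar - rG ymed) (hΔ2 : Δ2 = rG ymed - rG ybad)
    (s : ℝ) (hs : s = ⟪φ ystar, φ ymed⟫) (hspos : 0 < s)
    (horthbad : ∀ yb ∈ Ybad, ∀ y : Y, y ≠ yb → ⟪φ yb, φ y⟫ = 0)
    (rP : Y → ℝ) (hrP : ∀ y, rP y ∈ Set.Icc (-1 : ℝ) 1)
    (hrPeq : ∀ y : Y, y ≠ ymed → rP y = rG y)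
    (hrPmed : rP ymed ≤ Finset.inf' Ybad ⟨ybad, hybad⟩ rG)
    (θt : ℝ → EuclideanSpace ℝ (Fin D))
    (hflow : ∀ t : ℝ, 0 ≤ t → HasDerivAt θt (gradient (expReward φ rP) (θt t)) t)
    (B M' : ℝ)
    (hB : B = Finset.univ.sup' ⟨ystar, Finset.mem_univ ystar⟩ fun y => ‖φ y‖)
    (hM' : M' = min 1 (‖φ ymed‖ ^ 2 * rG ymed ^ ((2:ℝ)/7) / (40 * B ^ 2 * (Δ1 + Δ2))))
    (hinit1 : policy φ (θt 0) ystar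
        < min (M' * (min 0.01 ((21 * ‖φ ymed‖ ^ 2 / (1100 * B ^ 2 * (Δ1 + Δ2))) ^ ((7:ℝ)/3))) ^ ((13:ℝ)/14))
            (‖φ ymed‖ / ‖φ ystar‖ * policy φ (θt 0) ymed))
    (hinit2 : max (2 * policy φ (θt 0) ystar ^ ((7:ℝ)/13) / (Δ2 * M' ^ ((7:ℝ)/13)))
        (0.05 * rG ymed) ≤ ∑ y ∈ Ybad, policy φ (θt 0) y)
    (hinit3 : ∑ y ∈ Ybad, policy φ (θt 0) y ≤ 0.1 * rG ymed)
    (hchain1 : ‖φ ymed‖ ^ 2 < s) (hchain2 : s < ‖φ ystar‖ ^ 2)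
    (hchain3 : ‖φ ystar‖ ^ 2 < 100 * ‖φ ymed‖ ^ 2)
    (hscond : (policy φ (θt 0) ystar * (rP ystar - expReward φ rP (θt 0)) * ‖φ ystar‖ ^ 2
          - policy φ (θt 0) ymed * (rP ymed - expReward φ rP (θt 0)) * ‖φ ymed‖ ^ 2)
        / (policy φ (θt 0) ystar * (rP ystar - expReward φ rP (θt 0))
          - policy φ (θt 0) ymed * (rP ymed - expReward φ rP (θt 0))) < s) :
    ∀ t : ℝ, 0 ≤ t →
      expReward φ rG (θt t)
        < rG ystar - (rG ystar - rG ymed) * policy φ (θt 0) ymed := by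
  have split := sum_split ystar ymed Ybad hsm hsb hmb hcover
  have hpos := fun θ y => policy_pos φ θ y
  have hbpos : ∀ θ, 0 < ∑ y ∈ Ybad, policy φ θ y := fun θ =>
    Finset.sum_pos (fun y _ => hpos θ y) ⟨ybad, hybad⟩
  have hsum : ∀ θ, policy φ θ ystar + policy φ θ ymed + ∑ y ∈ Ybad, policy φ θ y = 1 := fun θ => by
    rw [← split, policy_sum ystar]
  have hrPm : rP ymed ≤ rG ybad := hrPmed.trans (Finset.inf'_le _ hybad)
  have hrb := hr3 ybad hybad
  have hrPs : rP ystar = rG ystar := hrPeq _ hsm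
  have hVP : ∀ θ, expReward φ rP θ = policy φ θ ystar * rG ystar + policy φ θ ymed * rP ymed
      + (∑ y ∈ Ybad, policy φ θ y) * rG ybad := by
    intro θ
    unfold expReward
    rw [split, hrPs, Finset.sum_mul]
    congr 1
    refine Finset.sum_congr rfl fun y hy => ?_
    rw [hrPeq y (fun h => hmb (h ▸ hy)), hr4 y hy]
  have hVG : ∀ θ, expReward φ rG θ = policy φ θ ystar * rG ystar + policy φ θ ymed * rG ymed
      + (∑ y ∈ Ybad, policy φ θ y) * rG ybad := by
    intro θ
    unfold expReward
    rw [split, Finset.sum_mul]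
    congr 1
    refine Finset.sum_congr rfl fun y hy => ?_
    rw [hr4 y hy]
  have hVR : ∀ θ, expReward φ rP θ < rG ystar := by
    intro θ
    rw [hVP]
    have e := hsum θ
    have h1 := mul_pos (hpos θ ymed) (show 0 < rG ystar - rP ymed by linarith)
    have h2 := mul_pos (hbpos θ) (show 0 < rG ystar - rG ybad by linarith)
    have : rG ystar = (policy φ θ ystar + policy φ θ ymed + ∑ y ∈ Ybad, policy φ θ y) * rG ystar := by
      rw [e, one_mul]
    linarith
  have hVm : ∀ θ, rP ymed < expReward φ rP θ := by
    intro θ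
    rw [hVP]
    have e := hsum θ
    have h1 := mul_pos (hpos θ ystar) (show 0 < rG ystar - rP ymed by linarith)
    have h2 := mul_nonneg (hbpos θ).le (show 0 ≤ rG ybad - rP ymed by linarith)
    have : rP ymed = (policy φ θ ystar + policy φ θ ymed + ∑ y ∈ Ybad, policy φ θ y) * rP ymed := by
      rw [e, one_mul]
    linarith
  have hx : ∀ z, ∀ t, 0 ≤ t → HasDerivAt (fun t => ⟪φ z, θt t⟫)
      ⟪gradient (expReward φ rP) (θt t), φ z⟫ t := by
    intro z t ht
    have := (hasDerivAt_const t (φ z)).inner ℝ (hflow t ht)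
    rw [real_inner_comm]
    simpa using this
  have hV : ∀ t, 0 ≤ t → HasDerivAt (fun t => expReward φ rP (θt t))
      ⟪gradient (expReward φ rP) (θt t), gradient (expReward φ rP) (θt t)⟫ t := by
    intro t ht
    rw [grad_inner ystar]
    exact expReward_curve ystar φ rP θt _ t (hflow t ht)
  have hbz : ∀ z, z ∉ Ybad → ∀ θ, ∑ y ∈ Ybad, policy φ θ y * (rP y - expReward φ rP θ) * ⟪φ y, φ z⟫ = 0 := by
    intro z hz θ
    refine Finset.sum_eq_zero fun y hy => ?_
    rw [horthbad y hy z (fun h => hz (h ▸ hy)), mul_zero]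
  have hratio : ∀ θ, Real.exp (⟪φ ystar, θ⟫ - ⟪φ ymed, θ⟫) = policy φ θ ystar / policy φ θ ymed := by
    intro θ
    unfold policy
    rw [div_div_div_cancel_right₀ (part_pos ystar φ θ).ne', Real.exp_sub]
  have has : 0 < ‖φ ystar‖ ^ 2 - s := by linarith
  have hsm' : 0 < s - ‖φ ymed‖ ^ 2 := by linarith
  have key := scalar_core (fun t => ⟪φ ystar, θt t⟫ - ⟪φ ymed, θt t⟫)
    (fun t => expReward φ rP (θt t))
    (fun t => ⟪gradient (expReward φ rP) (θt t), φ ystar⟫ - ⟪gradient (expReward φ rP) (θt t), φ ymed⟫)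
    (fun t => ⟪gradient (expReward φ rP) (θt t), gradient (expReward φ rP) (θt t)⟫)
    (fun t => policy φ (θt t) ymed * (expReward φ rP (θt t) - rP ymed) * (‖φ ystar‖ ^ 2 - s))
    (rG ystar) (rP ymed) ((s - ‖φ ymed‖ ^ 2) / (‖φ ystar‖ ^ 2 - s))
    (fun t ht => (hx ystar t ht).sub (hx ymed t ht)) hV
    (fun t _ => real_inner_self_nonneg) (fun t _ => hVR _) (fun t _ => hVm _)
    (fun t _ => mul_pos (mul_pos (hpos _ _) (sub_pos.2 (hVm _))) has)
    (by
      intro t _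
      rw [grad_inner ystar, grad_inner ystar, split, split, hbz _ hsb, hbz _ hmb, hratio,
        real_inner_self_eq_norm_sq, real_inner_self_eq_norm_sq, real_inner_comm (φ ystar) (φ ymed), ← hs, hrPs]
      have h1 := (hpos (θt t) ymed).ne'
      have h2 := (sub_pos.2 (hVm (θt t))).ne'
      have h3 := has.ne'
      field_simp
      ring)
    (by
      rw [hratio]
      rw [hrPs] at hscond
      have h1 := hpos (θt 0) ymed
      have h0 := hpos (θt 0) ystar
      have h2 := sub_pos.2 (hVm (θt 0))
      have h4 := sub_pos.2 (hVR (θt 0))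
      have h5 : 0 < policy φ (θt 0) ystar * (rG ystar - expReward φ rP (θt 0))
          - policy φ (θt 0) ymed * (rP ymed - expReward φ rP (θt 0)) := by
        have := mul_pos h0 h4
        have := mul_pos h1 h2
        linarith
      rw [div_lt_iff₀ h5] at hscond
      rw [div_mul_div_comm, div_lt_div_iff₀ (mul_pos h1 h2) has]
      linarith)
  -- initial policy bounds
  have hp0 := hpos (θt 0) ystar
  have hq0 := hpos (θt 0) ymed
  have hs0 := hsum (θt 0)
  have hp0b : policy φ (θt 0) ystar ≤ ∑ y ∈ Ybad, policy φ (θt 0) y := by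
    have hD2 : 0 < Δ2 := by linarith
    have hD2' : Δ2 ≤ 2 := by linarith [(hrG ymed).2, (hrG ybad).1]
    have hBpos : 0 < B := by
      have : ‖φ ystar‖ ≤ B := by
        rw [hB]; exact Finset.le_sup' (fun y => ‖φ y‖) (Finset.mem_univ ystar)
      exact lt_of_lt_of_le (norm_pos_iff.2 (hφ ystar)) this
    have hD : 0 < Δ1 + Δ2 := by linarith
    have hmn := norm_pos_iff.2 (hφ ymed)
    have hMpos : 0 < M' := by
      rw [hM']
      exact lt_min one_pos (by positivity)
    have hM1 : M' ≤ 1 := by rw [hM']; exact min_le_left _ _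
    have hMp : M' ^ ((7:ℝ)/13) ≤ 1 := Real.rpow_le_one hMpos.le hM1 (by norm_num)
    have hMp0 : 0 < M' ^ ((7:ℝ)/13) := Real.rpow_pos_of_pos hMpos _
    have hp1 : policy φ (θt 0) ystar ≤ 1 := by linarith [hbpos (θt 0)]
    have h1 : policy φ (θt 0) ystar ≤ policy φ (θt 0) ystar ^ ((7:ℝ)/13) := by
      simpa using Real.rpow_le_rpow_of_exponent_ge hp0 hp1 (show (7:ℝ)/13 ≤ 1 by norm_num)
    refine le_trans ?_ ((le_max_left _ _).trans hinit2)
    rw [le_div_iff₀ (mul_pos hD2 hMp0)]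
    have h2 : Δ2 * M' ^ ((7:ℝ)/13) ≤ 2 := by nlinarith
    nlinarith
  have hb1 : ∑ y ∈ Ybad, policy φ (θt 0) y ≤ 0.1 := by
    linarith [(hrG ymed).2]
  intro t ht
  have hk := Real.exp_le_exp.2 (key t ht)
  simp only [hratio] at hk
  have hpt := hpos (θt t) ystar
  have hqt := hpos (θt t) ymed
  have hbt := hbpos (θt t)
  have hst := hsum (θt t)
  rw [div_le_div_iff₀ hqt hq0] at hk
  rw [hVG]
  generalize policy φ (θt t) ystar = p at *
  generalize policy φ (θt t) ymed = q at *
  generalize (∑ y ∈ Ybad, policy φ (θt t) y) = b at *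
  generalize policy φ (θt 0) ystar = p0 at *
  generalize policy φ (θt 0) ymed = q0 at *
  generalize (∑ y ∈ Ybad, policy φ (θt 0) y) = b0 at *
  have hp : p ≤ 1 - q0 := by
    have hq1 : q ≤ 1 := by linarith
    have h1 : p * q0 ≤ p0 := by nlinarith
    have h2 : p0 ≤ (1 - q0) * q0 := by nlinarith
    exact le_of_mul_le_mul_right (h1.trans h2) hq0
  have hb : b * (rG ymed - rG ybad) > 0 := mul_pos hbt (by linarith)
  have h3 := mul_le_mul_of_nonneg_left hp (show 0 ≤ rG ystar - rG ymed by linarith)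
  have h4 : q = 1 - p - b := by linarith
  subst h4
  nlinarith
end

section
/- Let r_G : Y → [-1, 1] be a reward function and B = max_{y∈Y} ‖φ(y)‖. Then the gradient of the expected reward V_G is 6B²-Lipschitz: for any θ, θ' ∈ ℝ^D, ‖∇V_G(θ) − ∇V_G(θ')‖ ≤ 6 B² ‖θ − θ'‖. -/
open scoped BigOperators RealInnerProductSpace

section aux

variable {Y : Type*} [Fintype Y] [Nonempty Y] {D : ℕ}

theorem Z_pos_aux (φ : Y → EuclideanSpace ℝ (Fin D)) (θ : EuclideanSpace ℝ (Fin D)) :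
    0 < ∑ z, Real.exp ⟪φ z, θ⟫ :=
  Finset.sum_pos (fun _ _ => Real.exp_pos _) Finset.univ_nonempty

theorem policy_nonneg_aux (φ : Y → EuclideanSpace ℝ (Fin D)) (θ : EuclideanSpace ℝ (Fin D))
    (y : Y) : 0 ≤ policy φ θ y :=
  div_nonneg (Real.exp_pos _).le (Z_pos_aux φ θ).le

theorem policy_sum_aux (φ : Y → EuclideanSpace ℝ (Fin D)) (θ : EuclideanSpace ℝ (Fin D)) :
    ∑ y, policy φ θ y = 1 := by
  unfold policy
  rw [← Finset.sum_div, div_self (Z_pos_aux φ θ).ne']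

/-- Mean of a vector-valued function under the policy. -/
noncomputable def meanAux {F : Type*} [NormedAddCommGroup F] [NormedSpace ℝ F]
    (φ : Y → EuclideanSpace ℝ (Fin D)) (f : Y → F) (θ : EuclideanSpace ℝ (Fin D)) : F :=
  ∑ y, policy φ θ y • f y

theorem norm_mean_aux {F : Type*} [NormedAddCommGroup F] [NormedSpace ℝ F]
    (φ : Y → EuclideanSpace ℝ (Fin D)) (f : Y → F) (θ : EuclideanSpace ℝ (Fin D))
    (C : ℝ) (hC : ∀ y, ‖f y‖ ≤ C) : ‖meanAux φ f θ‖ ≤ C := by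
  unfold meanAux
  calc ‖∑ y, policy φ θ y • f y‖ ≤ ∑ y, policy φ θ y * C := by
        refine norm_sum_le_of_le _ fun y _ => ?_
        rw [norm_smul, Real.norm_of_nonneg (policy_nonneg_aux φ θ y)]
        exact mul_le_mul_of_nonneg_left (hC y) (policy_nonneg_aux φ θ y)
    _ = C := by rw [← Finset.sum_mul, policy_sum_aux, one_mul]

theorem policy_deriv_aux (φ : Y → EuclideanSpace ℝ (Fin D)) (θ : EuclideanSpace ℝ (Fin D))
    (y : Y) : HasFDerivAt (fun t => policy φ t y)
      (policy φ θ y • innerSL ℝ (φ y - meanAux φ φ θ)) θ := by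
  have hin : ∀ z, HasFDerivAt (fun t => Real.exp ⟪φ z, t⟫)
      (Real.exp ⟪φ z, θ⟫ • innerSL ℝ (φ z)) θ := fun z =>
    ((innerSL ℝ (φ z)).hasFDerivAt (x := θ)).exp
  have hZ : HasFDerivAt (fun t => ∑ z, Real.exp ⟪φ z, t⟫)
      (∑ z, Real.exp ⟪φ z, θ⟫ • innerSL ℝ (φ z)) θ :=
    HasFDerivAt.fun_sum fun z _ => hin z
  have h0 := (Z_pos_aux φ θ).ne'
  have h := (hin y).fun_mul ((hasDerivAt_inv h0).comp_hasFDerivAt θ hZ)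
  unfold policy
  simp only [div_eq_mul_inv]
  refine h.congr_fderiv ?_
  ext v
  have hm : ⟪meanAux φ φ θ, v⟫ = (∑ z, Real.exp ⟪φ z, θ⟫ * ⟪φ z, v⟫) / ∑ z, Real.exp ⟪φ z, θ⟫ := by
    unfold meanAux policy
    rw [sum_inner, Finset.sum_div]
    refine Finset.sum_congr rfl fun z _ => ?_
    rw [real_inner_smul_left]; ring
  simp [sum_apply, inner_sub_left, hm]
  field_simp
  ring

theorem mean_lip_aux {F : Type*} [NormedAddCommGroup F] [NormedSpace ℝ F]
    (φ : Y → EuclideanSpace ℝ (Fin D)) (B : ℝ) (hB : ∀ y, ‖φ y‖ ≤ B) (f : Y → F)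
    (C : ℝ) (hC : ∀ y, ‖f y‖ ≤ C) (θ θ' : EuclideanSpace ℝ (Fin D)) :
    ‖meanAux φ f θ - meanAux φ f θ'‖ ≤ 2 * B * C * ‖θ - θ'‖ := by
  have hd : ∀ t, HasFDerivAt (meanAux φ f)
      (∑ y, (policy φ t y • innerSL ℝ (φ y - meanAux φ φ t)).smulRight (f y)) t := fun t =>
    HasFDerivAt.fun_sum fun y _ => (policy_deriv_aux φ t y).smul_const (f y)
  refine Convex.norm_image_sub_le_of_norm_hasFDerivWithin_le (s := Set.univ)
    (fun t _ => (hd t).hasFDerivWithinAt) (fun t _ => ?_) convex_univ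
    (Set.mem_univ _) (Set.mem_univ _)
  calc _ ≤ ∑ y, policy φ t y * (2 * B * C) := by
        refine norm_sum_le_of_le _ fun y _ => ?_
        rw [ContinuousLinearMap.norm_smulRight_apply, norm_smul, innerSL_apply_norm,
          Real.norm_of_nonneg (policy_nonneg_aux φ t y), mul_assoc]
        refine mul_le_mul_of_nonneg_left ?_ (policy_nonneg_aux φ t y)
        have h1 : ‖φ y - meanAux φ φ t‖ ≤ 2 * B := by
          have := norm_sub_le (φ y) (meanAux φ φ t)
          have := norm_mean_aux φ φ t B hB
          have := hB y
          linarith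
        exact mul_le_mul h1 (hC y) (norm_nonneg _) ((norm_nonneg _).trans h1)
    _ = _ := by rw [← Finset.sum_mul, policy_sum_aux, one_mul]

theorem grad_aux (φ : Y → EuclideanSpace ℝ (Fin D)) (r : Y → ℝ)
    (θ : EuclideanSpace ℝ (Fin D)) : gradient (expReward φ r) θ =
      meanAux φ (fun y => r y • φ y) θ - meanAux φ r θ • meanAux φ φ θ := by
  apply HasGradientAt.gradient
  rw [hasGradientAt_iff_hasFDerivAt]
  have h : HasFDerivAt (expReward φ r)
      (∑ y, r y • (policy φ θ y • innerSL ℝ (φ y - meanAux φ φ θ))) θ :=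
    HasFDerivAt.fun_sum fun y _ => (policy_deriv_aux φ θ y).mul_const (r y)
  refine h.congr_fderiv ?_
  ext v
  rw [InnerProductSpace.toDual_apply_apply, inner_sub_left, real_inner_smul_left]
  have h1 : ⟪meanAux φ (fun y => r y • φ y) θ, v⟫ = ∑ y, policy φ θ y * (r y * ⟪φ y, v⟫) := by
    unfold meanAux
    simp [sum_inner, real_inner_smul_left]
  have h2 : meanAux φ r θ = ∑ y, policy φ θ y * r y := rfl
  rw [h1, h2, Finset.sum_mul, ← Finset.sum_sub_distrib, sum_apply]
  refine Finset.sum_congr rfl fun y _ => ?_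
  simp only [smul_apply, innerSL_apply_apply, inner_sub_left, smul_eq_mul]
  ring

end aux

theorem gradient_lipschitz {Y : Type*} [Fintype Y] [Nonempty Y] {D : ℕ}
    (φ : Y → EuclideanSpace ℝ (Fin D)) (hφ : ∀ y, φ y ≠ 0)
    (rG : Y → ℝ) (hrG : ∀ y, rG y ∈ Set.Icc (-1 : ℝ) 1)
    (B : ℝ) (hB : B = Finset.univ.sup' Finset.univ_nonempty fun y => ‖φ y‖)
    (θ θ' : EuclideanSpace ℝ (Fin D)) :
    ‖gradient (expReward φ rG) θ - gradient (expReward φ rG) θ'‖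
      ≤ 6 * B ^ 2 * ‖θ - θ'‖ := by
  have hb : ∀ y, ‖φ y‖ ≤ B := fun y => by
    rw [hB]; exact Finset.le_sup' (fun y => ‖φ y‖) (Finset.mem_univ y)
  have hr : ∀ y, ‖rG y‖ ≤ 1 := fun y => by
    rw [Real.norm_eq_abs]; exact abs_le.2 (hrG y)
  have hrb : ∀ y, ‖rG y • φ y‖ ≤ B := fun y => by
    rw [norm_smul]
    have := mul_le_mul (hr y) (hb y) (norm_nonneg _) zero_le_one
    linarith
  have e1 := mean_lip_aux φ B hb (fun y => rG y • φ y) B hrb θ θ'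
  have e2 := mean_lip_aux φ B hb rG 1 hr θ θ'
  have e3 := mean_lip_aux φ B hb φ B hb θ θ'
  have e4 := norm_mean_aux φ rG θ 1 hr
  have e5 := norm_mean_aux φ φ θ' B hb
  rw [grad_aux, grad_aux]
  set P := meanAux φ (fun y => rG y • φ y) θ
  set P' := meanAux φ (fun y => rG y • φ y) θ'
  set v := meanAux φ rG θ
  set v' := meanAux φ rG θ'
  set m := meanAux φ φ θ
  set m' := meanAux φ φ θ'
  have key : P - v • m - (P' - v' • m') = (P - P') - (v • (m - m') + (v - v') • m') := by
    rw [smul_sub, sub_smul]; abel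
  rw [key]
  have n1 := norm_sub_le (P - P') (v • (m - m') + (v - v') • m')
  have n2 := norm_add_le (v • (m - m')) ((v - v') • m')
  rw [norm_smul, norm_smul] at n2
  have n3 : ‖v‖ * ‖m - m'‖ ≤ 1 * (2 * B * B * ‖θ - θ'‖) :=
    mul_le_mul e4 e3 (norm_nonneg _) zero_le_one
  have n4 : ‖v - v'‖ * ‖m'‖ ≤ (2 * B * 1 * ‖θ - θ'‖) * B :=
    mul_le_mul e2 e5 (norm_nonneg _) ((norm_nonneg _).trans e2)
  nlinarith
end

section
/- Assume the feature vectors {φ(y)}_{y∈Y} are orthonormal, the ground truth reward r_G satisfies the reward structure assumption, and the initial parameters θ_0 satisfy the initial policy assumption (orthonormal case). Let γ := (π_{θ_0}(y_⋆)/M)^{14/13}, suppose θ_t evolves by gradient flow maximizing V_G, assume there is a time at which V_G(θ_t) ≥ r_G(y_med) − γ, and let t_γ be the first such time. Then for all t ∈ [0, t_γ]: d/dt π_{θ_t}(y_⋆) < 0 and d/dt π_{θ_t}(y_med) > 0; moreover min_{t∈[0, t_γ]} π_{θ_t}(y_⋆) = π_{θ_{t_γ}}(y_⋆) ≤ π_{θ_0}(y_med)²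 γ / (8 A_G(y_⋆; θ_0)). -/
open scoped BigOperators RealInnerProductSpace

lemma aux_policy_fderiv {Y : Type*} [Fintype Y] [Nonempty Y] {D : ℕ}
    (φ : Y → EuclideanSpace ℝ (Fin D)) (θ : EuclideanSpace ℝ (Fin D)) (y : Y) :
    HasFDerivAt (fun x => policy φ x y)
      (policy φ θ y • (innerSL ℝ (φ y) - ∑ z, policy φ θ z • innerSL ℝ (φ z))) θ := by
  have h1 : ∀ z, HasFDerivAt (fun x : EuclideanSpace ℝ (Fin D) => Real.exp ⟪φ z, x⟫)
      (Real.exp ⟪φ z, θ⟫ • innerSL ℝ (φ z)) θ := fun z =>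
    ((innerSL ℝ (φ z)).hasFDerivAt (x := θ)).exp
  have h2 : HasFDerivAt (fun x : EuclideanSpace ℝ (Fin D) => ∑ z, Real.exp ⟪φ z, x⟫)
      (∑ z, Real.exp ⟪φ z, θ⟫ • innerSL ℝ (φ z)) θ := by
    exact HasFDerivAt.fun_sum (fun z _ => h1 z)
  have hpos : 0 < ∑ z, Real.exp ⟪φ z, θ⟫ :=
    Finset.sum_pos (fun z _ => Real.exp_pos _) Finset.univ_nonempty
  have h3 := (h1 y).mul ((hasDerivAt_inv hpos.ne').comp_hasFDerivAt θ h2)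
  refine HasFDerivAt.congr_fderiv (h3.congr_of_eventuallyEq
    (Filter.Eventually.of_forall fun x => div_eq_mul_inv _ _)) ?_
  ext v
  simp only [policy, ContinuousLinearMap.smul_apply, ContinuousLinearMap.sub_apply,
    ContinuousLinearMap.sum_apply, smul_eq_mul, innerSL_apply_apply]
  have : ∑ z, Real.exp ⟪φ z, θ⟫ / (∑ z, Real.exp ⟪φ z, θ⟫) * ⟪φ z, v⟫
      = (∑ z, Real.exp ⟪φ z, θ⟫ * ⟪φ z, v⟫) / (∑ z, Real.exp ⟪φ z, θ⟫) := by
    rw [Finset.sum_div]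
    exact Finset.sum_congr rfl (fun z _ => by ring)
  simp only [add_apply, smul_apply, sum_apply, smul_eq_mul, innerSL_apply_apply,
    Function.comp_apply]
  rw [this]
  field_simp
  ring

lemma aux_policy_sum {Y : Type*} [Fintype Y] [Nonempty Y] {D : ℕ}
    (φ : Y → EuclideanSpace ℝ (Fin D)) (θ : EuclideanSpace ℝ (Fin D)) :
    ∑ y, policy φ θ y = 1 := by
  have hpos : 0 < ∑ z, Real.exp ⟪φ z, θ⟫ :=
    Finset.sum_pos (fun z _ => Real.exp_pos _) Finset.univ_nonempty
  simp only [policy]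
  rw [← Finset.sum_div, div_self hpos.ne']

lemma aux_policy_pos {Y : Type*} [Fintype Y] [Nonempty Y] {D : ℕ}
    (φ : Y → EuclideanSpace ℝ (Fin D)) (θ : EuclideanSpace ℝ (Fin D)) (y : Y) :
    0 < policy φ θ y :=
  div_pos (Real.exp_pos _) (Finset.sum_pos (fun z _ => Real.exp_pos _) Finset.univ_nonempty)

lemma aux_gradient {Y : Type*} [Fintype Y] [Nonempty Y] {D : ℕ}
    (φ : Y → EuclideanSpace ℝ (Fin D)) (r : Y → ℝ) (θ : EuclideanSpace ℝ (Fin D)) :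
    gradient (expReward φ r) θ
      = ∑ y, (policy φ θ y * (r y - expReward φ r θ)) • φ y := by
  apply HasGradientAt.gradient
  rw [hasGradientAt_iff_hasFDerivAt]
  have h : HasFDerivAt (fun x => ∑ y, policy φ x y * r y)
      (∑ y, r y • (policy φ θ y • (innerSL ℝ (φ y) - ∑ z, policy φ θ z • innerSL ℝ (φ z)))) θ := by
    exact HasFDerivAt.fun_sum (fun z _ => (aux_policy_fderiv φ θ z).mul_const (r z))
  refine HasFDerivAt.congr_fderiv h ?_
  ext v
  simp only [ContinuousLinearMap.smul_apply, ContinuousLinearMap.sub_apply,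
    ContinuousLinearMap.sum_apply, smul_eq_mul, innerSL_apply_apply,
    InnerProductSpace.toDual_apply_apply, sum_inner, real_inner_smul_left]
  have e1 : ∀ c : ℝ, ∑ y, r y * (policy φ θ y * (⟪φ y, v⟫ - c))
      = ∑ y, r y * (policy φ θ y * ⟪φ y, v⟫) - expReward φ r θ * c := by
    intro c
    rw [expReward, Finset.sum_mul, ← Finset.sum_sub_distrib]
    exact Finset.sum_congr rfl (fun z _ => by ring)
  rw [e1, Finset.mul_sum, ← Finset.sum_sub_distrib]
  exact Finset.sum_congr rfl (fun z _ => by ring)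

lemma aux_policy_deriv {Y : Type*} [Fintype Y] [Nonempty Y] {D : ℕ}
    (φ : Y → EuclideanSpace ℝ (Fin D)) (horth : Orthonormal ℝ φ) (r : Y → ℝ)
    (θt : ℝ → EuclideanSpace ℝ (Fin D)) (t : ℝ)
    (hflow : HasDerivAt θt (gradient (expReward φ r) (θt t)) t) (y : Y) :
    HasDerivAt (fun τ => policy φ (θt τ) y)
      (policy φ (θt t) y * (policy φ (θt t) y * (r y - expReward φ r (θt t))
        - ∑ z, policy φ (θt t) z ^ 2 * (r z - expReward φ r (θt t)))) t := by
  classical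
  have h := (aux_policy_fderiv φ (θt t) y).comp_hasDerivAt t hflow
  refine HasDerivAt.congr_deriv h ?_
  rw [aux_gradient]
  have hi : ∀ z, ⟪φ z, ∑ y, (policy φ (θt t) y * (r y - expReward φ r (θt t))) • φ y⟫
      = policy φ (θt t) z * (r z - expReward φ r (θt t)) := by
    intro z
    exact horth.inner_right_fintype _ z
  simp only [ContinuousLinearMap.smul_apply, ContinuousLinearMap.sub_apply,
    ContinuousLinearMap.sum_apply, smul_eq_mul, innerSL_apply_apply, hi]
  congr 2
  exact Finset.sum_congr rfl (fun z _ => by ring)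

lemma aux_point (p q B Q d1 d2 : ℝ) (hp : 0 < p) (hB : 0 < B) (hQ : Q ≤ B ^ 2)
    (h1 : p + q + B = 1) (hd1 : 0 < d1) (hd2 : 0 < d2)
    (hC : p * d1 < 0.1 * (B * d2)) (hq : 0.85 < q) (S a : ℝ) (ha : a = B * d2 - p * d1)
    (hS : S = p ^ 2 * (a + d1) + q ^ 2 * a + Q * (a - d2)) (hQ0 : 0 ≤ Q) :
    p * (a + d1) - S < 0 ∧ 0 < q * a - S ∧
      7 * (p * (a + d1) - S) * B ≤ Q * (a - d2) - B * S := by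
  have ha0 : 0 < a := by rw [ha]; nlinarith [mul_pos hB hd2]
  have hpd : p * d1 ≤ a / 9 := by rw [ha]; linarith
  have hp15 : p < 0.15 := by linarith
  have hB15 : B < 0.15 := by linarith
  have hpB : p + B < 0.15 := by linarith
  set X := p * (a + d1) with hX
  have hX0 : 0 < X := by positivity
  have hXa : X ≤ 0.27 * a := by rw [hX]; nlinarith
  have hN : B * (d2 - a) = X + q * a := by
    have : q = 1 - p - B := by linarith
    rw [hX, this, ha]; ring
  have hN0 : 0 < d2 - a := by
    have : 0 < B * (d2 - a) := by rw [hN]; positivity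
    exact (pos_iff_pos_of_mul_pos this).1 hB
  set R := Q * (d2 - a) with hR
  have hR0 : 0 ≤ R := by positivity
  have hRle : R ≤ B * (X + q * a) := by
    rw [← hN, hR]; nlinarith [mul_le_mul_of_nonneg_right hQ hN0.le]
  have hS' : S = p * X + q ^ 2 * a - R := by rw [hS, hX, hR]; ring
  have hq1 : q < 1 := by linarith
  have hqa : 0.85 * a ≤ q * a := by nlinarith
  have hqqa : 0.85 * (q * a) ≤ q ^ 2 * a := by nlinarith
  have hBR : B * (X + q * a) ≤ 0.15 * (X + q * a) := by
    apply mul_le_mul_of_nonneg_right hB15.le; positivity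
  have hpX : 0 < p * X := by positivity
  refine ⟨?_, ?_, ?_⟩
  · rw [hS']; nlinarith
  · have e : q * a - S = q * (p + B) * a - p * X + R := by
      rw [hS']
      have : p + B = 1 - q := by linarith
      rw [this]; ring
    rw [e]
    have : p * X ≤ p * (0.27 * a) := mul_le_mul_of_nonneg_left hXa hp.le
    have h2 : p * (0.85 * a) ≤ p * (q * a) := mul_le_mul_of_nonneg_left hqa hp.le
    have h3 : 0 < q * B * a := by positivity
    nlinarith [mul_pos hp ha0]
  · have hk : 8 * X + q * a ≤ 6 * S := by rw [hS']; nlinarith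
    have e : Q * (a - d2) = - R := by rw [hR]; ring
    rw [e]
    nlinarith [mul_le_mul_of_nonneg_left hk hB.le]

lemma aux_core (p q B Q : ℝ → ℝ) (d1 d2 M g T : ℝ)
    (hp : ∀ t, 0 < p t) (hB : ∀ t, 0 < B t) (hQ0 : ∀ t, 0 ≤ Q t) (hQ : ∀ t, Q t ≤ B t ^ 2)
    (h1 : ∀ t, p t + q t + B t = 1) (hd1 : 0 < d1) (hd2 : 0 < d2)
    (a S : ℝ → ℝ) (ha : ∀ t, a t = B t * d2 - p t * d1)
    (hS : ∀ t, S t = p t ^ 2 * (a t + d1) + q t ^ 2 * a t + Q t * (a t - d2))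
    (hp' : ∀ t, 0 ≤ t → HasDerivAt p (p t * (p t * (a t + d1) - S t)) t)
    (hq' : ∀ t, 0 ≤ t → HasDerivAt q (q t * (q t * a t - S t)) t)
    (hB' : ∀ t, 0 ≤ t → HasDerivAt B (Q t * (a t - d2) - B t * S t) t)
    (hg : 0 < g) (hg1 : g < 0.75) (hM : 0 < M) (hM1 : M ≤ 1) (hMd : M * (d1 + d2) ≤ 0.05)
    (hp0 : p 0 = M * g ^ 13) (hB0 : 2 * g ^ 7 ≤ B 0 * d2) (hB1 : B 0 ≤ 0.1)
    (hT : 0 ≤ T) (haT : a T ≤ g ^ 14) (haf : ∀ t, 0 ≤ t → a t ≤ g ^ 14 → T ≤ t) :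
    (∀ t ∈ Set.Icc 0 T, p t * (p t * (a t + d1) - S t) < 0 ∧ 0 < q t * (q t * a t - S t)) ∧
    (∀ t ∈ Set.Icc 0 T, p T ≤ p t) ∧ p T ≤ q 0 ^ 2 * g ^ 14 / (8 * (a 0 + d1)) := by
  have hg13 : g ^ 13 < 0.03 := by
    have : g ^ 13 < 0.75 ^ 13 := pow_lt_pow_left₀ hg1 hg.le (by norm_num)
    refine this.trans (by norm_num)
  have hp03 : p 0 < 0.03 := by
    rw [hp0]; nlinarith [pow_pos hg 13]
  have hq0 : 0.87 < q 0 := by linarith [h1 0]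
  have hp0d : p 0 * (d1 + d2) ≤ 0.05 * g ^ 13 := by
    rw [hp0]; nlinarith [mul_le_mul_of_nonneg_right hMd (pow_pos hg 13).le]
  -- continuity
  have cp : ∀ t, 0 ≤ t → ContinuousAt p t := fun t ht => (hp' t ht).continuousAt
  have cq : ∀ t, 0 ≤ t → ContinuousAt q t := fun t ht => (hq' t ht).continuousAt
  have cB : ∀ t, 0 ≤ t → ContinuousAt B t := fun t ht => (hB' t ht).continuousAt
  have ca : ∀ t, 0 ≤ t → ContinuousAt a t := by
    intro t ht
    have : a = fun t => B t * d2 - p t * d1 := funext ha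
    rw [this]
    exact ((cB t ht).mul continuousAt_const).sub ((cp t ht).mul continuousAt_const)
  have ha0 : g ^ 14 < a 0 := by
    rw [ha]
    have h2 : p 0 * d1 ≤ 0.05 * g ^ 13 := by nlinarith [hp 0]
    have h3 : g ^ 13 ≤ g ^ 7 := pow_le_pow_of_le_one hg.le (by linarith) (by norm_num)
    have h4 : g ^ 14 ≤ g ^ 7 := pow_le_pow_of_le_one hg.le (by linarith) (by norm_num)
    nlinarith [pow_pos hg 7]
  have hT0 : 0 < T := by
    rcases hT.lt_or_eq with h | h
    · exact h
    · rw [← h] at haT; linarith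
  have hag : ∀ t ∈ Set.Icc 0 T, g ^ 14 ≤ a t := by
    intro t ht
    have hcl : closure (Set.Ico 0 T) = Set.Icc 0 T := closure_Ico hT0.ne
    refine le_on_closure (s := Set.Ico 0 T) (f := fun _ => g ^ 14) (g := a) ?_
      continuousOn_const ?_ (by rw [hcl]; exact ht)
    · intro x hx
      by_contra hc
      exact absurd (haf x hx.1 (not_le.1 hc).le) (not_le.2 hx.2)
    · rw [hcl]; exact fun x hx => (ca x hx.1).continuousWithinAt
  -- pointwise consequences
  have hpt : ∀ t, p t * d1 < 0.1 * (B t * d2) → 0.85 < q t →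
      p t * (a t + d1) - S t < 0 ∧ 0 < q t * a t - S t ∧
      7 * (p t * (a t + d1) - S t) * B t ≤ Q t * (a t - d2) - B t * S t := fun t hC hqq =>
    aux_point (p t) (q t) (B t) (Q t) d1 d2 (hp t) (hB t) (hQ t) (h1 t) hd1 hd2 hC hqq
      (S t) (a t) (ha t) (hS t) (hQ0 t)
  -- monotonicity up to a time
  have hmono : ∀ s, 0 ≤ s → (∀ t ∈ Set.Ico 0 s, p t * d1 < 0.1 * (B t * d2) ∧ 0.85 < q t) →
      AntitoneOn p (Set.Icc 0 s) ∧ MonotoneOn q (Set.Icc 0 s) ∧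
      AntitoneOn (fun t => p t ^ 7 / B t) (Set.Icc 0 s) := by
    intro s hs hC
    have hF : ∀ t, 0 ≤ t → HasDerivAt (fun t => p t ^ 7 / B t)
        (p t ^ 7 / B t ^ 2 * (7 * (p t * (a t + d1) - S t) * B t
          - (Q t * (a t - d2) - B t * S t))) t := by
      intro t ht
      refine (((hp' t ht).pow 7).div (hB' t ht) (hB t).ne').congr_deriv ?_
      have := (hB t).ne'
      simp only [Pi.pow_apply]
      field_simp
      push_cast
      ring
    refine ⟨?_, ?_, ?_⟩
    · refine antitoneOn_of_deriv_nonpos (convex_Icc 0 s)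
        (fun x hx => (cp x hx.1).continuousWithinAt) ?_ ?_
      · rw [interior_Icc]
        exact fun x hx => (hp' x hx.1.le).differentiableAt.differentiableWithinAt
      · rw [interior_Icc]
        intro x hx
        rw [(hp' x hx.1.le).deriv]
        have h := hC x ⟨hx.1.le, hx.2⟩
        exact mul_nonpos_of_nonneg_of_nonpos (hp x).le (hpt x h.1 h.2).1.le
    · refine monotoneOn_of_deriv_nonneg (convex_Icc 0 s)
        (fun x hx => (cq x hx.1).continuousWithinAt) ?_ ?_
      · rw [interior_Icc]
        exact fun x hx => (hq' x hx.1.le).differentiableAt.differentiableWithinAt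
      · rw [interior_Icc]
        intro x hx
        rw [(hq' x hx.1.le).deriv]
        have h := hC x ⟨hx.1.le, hx.2⟩
        exact mul_nonneg (by linarith [h.2]) (hpt x h.1 h.2).2.1.le
    · refine antitoneOn_of_deriv_nonpos (convex_Icc 0 s)
        (fun x hx => (hF x hx.1).continuousAt.continuousWithinAt) ?_ ?_
      · rw [interior_Icc]
        exact fun x hx => (hF x hx.1.le).differentiableAt.differentiableWithinAt
      · rw [interior_Icc]
        intro x hx
        rw [(hF x hx.1.le).deriv]
        have h := hC x ⟨hx.1.le, hx.2⟩
        have hpx := hp x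
        have hBx := hB x
        exact mul_nonpos_of_nonneg_of_nonpos (by positivity)
          (by linarith [(hpt x h.1 h.2).2.2])
  -- quantitative bound from the invariant
  have hinv : ∀ t, p t ^ 7 / B t ≤ p 0 ^ 7 / B 0 →
      (p t * (d1 + d2)) ^ 7 ≤ 0.05 ^ 7 * g ^ 84 * (B t * d2) / 2 := by
    intro t h
    rw [div_le_div_iff₀ (hB t) (hB 0)] at h
    have hd : 0 < d1 + d2 := by linarith
    have e1 : (p 0 * (d1 + d2)) ^ 7 ≤ (0.05 * g ^ 13) ^ 7 :=
      pow_le_pow_left₀ (mul_pos (hp 0) hd).le hp0d 7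
    have e2 : (p t * (d1 + d2)) ^ 7 * (B 0 * d2) ≤ (0.05 * g ^ 13) ^ 7 * (B t * d2) := by
      calc (p t * (d1 + d2)) ^ 7 * (B 0 * d2) = (p t ^ 7 * B 0) * ((d1 + d2) ^ 7 * d2) := by ring
        _ ≤ (p 0 ^ 7 * B t) * ((d1 + d2) ^ 7 * d2) :=
          mul_le_mul_of_nonneg_right h (by positivity)
        _ = (p 0 * (d1 + d2)) ^ 7 * (B t * d2) := by ring
        _ ≤ _ := mul_le_mul_of_nonneg_right e1 (mul_pos (hB t) hd2).le
    have e3 : (p t * (d1 + d2)) ^ 7 * (2 * g ^ 7) ≤ (p t * (d1 + d2)) ^ 7 * (B 0 * d2) :=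
      mul_le_mul_of_nonneg_left hB0 (pow_pos (mul_pos (hp t) hd) 7).le
    have e4 : (p t * (d1 + d2)) ^ 7 * (2 * g ^ 7)
        ≤ (0.05 ^ 7 * g ^ 84 * (B t * d2) / 2) * (2 * g ^ 7) := by
      calc _ ≤ _ := e3.trans e2
        _ = _ := by ring
    exact le_of_mul_le_mul_right e4 (by positivity)
  have hkey : ∀ t ∈ Set.Icc 0 T, p t ^ 7 / B t ≤ p 0 ^ 7 / B 0 →
      p t * d1 ≤ 0.05 * (B t * d2) := by
    intro t ht h
    have h2 := hinv t h
    have h3 : g ^ 14 ≤ B t * d2 := by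
      have := hag t ht
      rw [ha] at this
      nlinarith [mul_pos (hp t) hd1]
    have h4 : (g ^ 14) ^ 6 ≤ (B t * d2) ^ 6 := pow_le_pow_left₀ (by positivity) h3 6
    have hBd : 0 < B t * d2 := mul_pos (hB t) hd2
    have h5 : (p t * (d1 + d2)) ^ 7 ≤ (0.05 * (B t * d2)) ^ 7 := by
      refine h2.trans ?_
      have : (g ^ 14) ^ 6 * (B t * d2) ≤ (B t * d2) ^ 6 * (B t * d2) :=
        mul_le_mul_of_nonneg_right h4 hBd.le
      calc 0.05 ^ 7 * g ^ 84 * (B t * d2) / 2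
          = 0.05 ^ 7 / 2 * ((g ^ 14) ^ 6 * (B t * d2)) := by ring
        _ ≤ 0.05 ^ 7 / 2 * ((B t * d2) ^ 6 * (B t * d2)) :=
          mul_le_mul_of_nonneg_left this (by norm_num)
        _ = 0.05 ^ 7 * (B t * d2) ^ 7 / 2 := by ring
        _ ≤ 0.05 ^ 7 * (B t * d2) ^ 7 := by
          have : 0 < 0.05 ^ 7 * (B t * d2) ^ 7 := by positivity
          linarith
        _ = _ := by ring
    have h6 := le_of_pow_le_pow_left₀ (by norm_num) (by positivity) h5
    nlinarith [mul_pos (hp t) hd2]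
  -- bootstrap
  have hall : ∀ t ∈ Set.Icc 0 T, p t * d1 < 0.1 * (B t * d2) ∧ 0.85 < q t := by
    by_contra hcon
    push Not at hcon
    obtain ⟨t0, ht0, hbad⟩ := hcon
    have hclosed : IsClosed
        ({t ∈ Set.Icc 0 T | 0.1 * (B t * d2) ≤ p t * d1} ∪ {t ∈ Set.Icc 0 T | q t ≤ 0.85}) := by
      apply IsClosed.union
      · exact isClosed_Icc.isClosed_le
          (fun x hx => (continuousAt_const.mul
            ((cB x hx.1).mul continuousAt_const)).continuousWithinAt)
          (fun x hx => ((cp x hx.1).mul continuousAt_const).continuousWithinAt)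
      · exact isClosed_Icc.isClosed_le
          (fun x hx => (cq x hx.1).continuousWithinAt) continuousOn_const
    have hcomp : IsCompact
        ({t ∈ Set.Icc 0 T | 0.1 * (B t * d2) ≤ p t * d1} ∪ {t ∈ Set.Icc 0 T | q t ≤ 0.85}) := by
      refine (isCompact_Icc (a := (0:ℝ)) (b := T)).of_isClosed_subset hclosed ?_
      rintro x (hx | hx) <;> exact hx.1
    obtain ⟨s, hs, hmin⟩ := hcomp.exists_isLeast ⟨t0, by
      by_cases hh : p t0 * d1 < 0.1 * (B t0 * d2)
      · exact Or.inr ⟨ht0, hbad hh⟩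
      · exact Or.inl ⟨ht0, not_lt.1 hh⟩⟩
    have hsI : s ∈ Set.Icc 0 T := by rcases hs with h | h <;> exact h.1
    have hC : ∀ t ∈ Set.Ico 0 s, p t * d1 < 0.1 * (B t * d2) ∧ 0.85 < q t := by
      intro t ht
      have htI : t ∈ Set.Icc 0 T := ⟨ht.1, ht.2.le.trans hsI.2⟩
      constructor
      · by_contra hh
        exact absurd (hmin (Or.inl ⟨htI, not_lt.1 hh⟩)) (not_le.2 ht.2)
      · by_contra hh
        exact absurd (hmin (Or.inr ⟨htI, not_lt.1 hh⟩)) (not_le.2 ht.2)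
    obtain ⟨_, m2, m3⟩ := hmono s hsI.1 hC
    have l0 : (0:ℝ) ∈ Set.Icc 0 s := ⟨le_rfl, hsI.1⟩
    have l1 : s ∈ Set.Icc 0 s := ⟨hsI.1, le_rfl⟩
    have n2 := m2 l0 l1 hsI.1
    have n3 := hkey s hsI (m3 l0 l1 hsI.1)
    have hBd : 0 < B s * d2 := mul_pos (hB s) hd2
    rcases hs with h | h
    · have := h.2; linarith
    · have := h.2; linarith
  obtain ⟨m1, m2, m3⟩ := hmono T hT (fun t ht => hall t ⟨ht.1, ht.2.le⟩)
  have l0 : (0:ℝ) ∈ Set.Icc 0 T := ⟨le_rfl, hT⟩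
  have l1 : T ∈ Set.Icc 0 T := ⟨hT, le_rfl⟩
  refine ⟨?_, fun t ht => m1 ht l1 ht.2, ?_⟩
  · intro t ht
    have h := hall t ht
    have h2 := hpt t h.1 h.2
    exact ⟨mul_neg_of_pos_of_neg (hp t) h2.1, mul_pos (by linarith [h.2]) h2.2.1⟩
  · have hd : 0 < d1 + d2 := by linarith
    have f0 := m3 l0 l1 hT
    have f1 := hinv T f0
    have f2 := hkey T l1 f0
    have f3 : B T * d2 / 2 ≤ g ^ 14 := by
      rw [ha] at haT
      nlinarith [mul_pos (hB T) hd2]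
    have f4 : (p T * (d1 + d2)) ^ 7 ≤ (0.05 * g ^ 14) ^ 7 := by
      refine f1.trans ?_
      calc 0.05 ^ 7 * g ^ 84 * (B T * d2) / 2 = 0.05 ^ 7 * g ^ 84 * (B T * d2 / 2) := by ring
        _ ≤ 0.05 ^ 7 * g ^ 84 * g ^ 14 := mul_le_mul_of_nonneg_left f3 (by positivity)
        _ = _ := by ring
    have f5 := le_of_pow_le_pow_left₀ (by norm_num) (by positivity) f4
    have hA : a 0 + d1 ≤ d1 + d2 := by
      rw [ha]; nlinarith [mul_pos (hp 0) hd1]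
    have hA0 : 0 < a 0 + d1 := by linarith [pow_pos hg 14]
    rw [le_div_iff₀ (by linarith)]
    have f6 : p T * (a 0 + d1) ≤ p T * (d1 + d2) := mul_le_mul_of_nonneg_left hA (hp T).le
    have f7 : 0.4 * g ^ 14 ≤ q 0 ^ 2 * g ^ 14 :=
      mul_le_mul_of_nonneg_right (by nlinarith) (by positivity)
    nlinarith

theorem monotonic_attraction {Y : Type*} [Fintype Y] {D : ℕ}
    (φ : Y → EuclideanSpace ℝ (Fin D)) (hφ : ∀ y, φ y ≠ 0)
    (horth : Orthonormal ℝ φ)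
    (rG : Y → ℝ) (hrG : ∀ y, rG y ∈ Set.Icc (-1 : ℝ) 1)
    (ystar ymed ybad : Y) (Ybad : Finset Y) (hybad : ybad ∈ Ybad)
    (hsm : ystar ≠ ymed) (hsb : ystar ∉ Ybad) (hmb : ymed ∉ Ybad)
    (hcover : ∀ y : Y, y = ystar ∨ y = ymed ∨ y ∈ Ybad)
    (hr1 : rG ymed < rG ystar) (hr2 : 0 < rG ymed)
    (hr3 : ∀ y ∈ Ybad, rG y ≤ 0)
    (hr4 : ∀ y ∈ Ybad, rG y = rG ybad)
    (Δ1 Δ2 : ℝ) (hΔ1 : Δ1 = rG ystar - rG ymed) (hΔ2 : Δ2 = rG ymed - rG ybad)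
    (θt : ℝ → EuclideanSpace ℝ (Fin D))
    (hflow : ∀ t : ℝ, 0 ≤ t → HasDerivAt θt (gradient (expReward φ rG) (θt t)) t)
    (M : ℝ) (hM : M = min 1 (0.05 * rG ymed ^ ((2:ℝ)/7) / (Δ1 + Δ2)))
    (hinit1 : policy φ (θt 0) ystar
        < M * (min 0.01 (min ((21 / (1100 * (Δ1 + Δ2))) ^ ((7:ℝ)/3)) (Δ2 ^ 2))) ^ ((13:ℝ)/14))
    (hinit2 : max (2 * policy φ (θt 0) ystar ^ ((7:ℝ)/13) / (Δ2 * M ^ ((7:ℝ)/13)))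
        (0.05 * rG ymed) ≤ ∑ y ∈ Ybad, policy φ (θt 0) y)
    (hinit3 : ∑ y ∈ Ybad, policy φ (θt 0) y ≤ 0.1 * rG ymed)
    (γ : ℝ) (hγ : γ = (policy φ (θt 0) ystar / M) ^ ((14:ℝ)/13))
    (tγ : ℝ) (htγ0 : 0 ≤ tγ)
    (htγ1 : rG ymed - γ ≤ expReward φ rG (θt tγ))
    (htγfirst : ∀ t : ℝ, 0 ≤ t → rG ymed - γ ≤ expReward φ rG (θt t) → tγ ≤ t) :
    (∀ t ∈ Set.Icc (0 : ℝ) tγ,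
        (∃ d : ℝ, HasDerivAt (fun τ : ℝ => policy φ (θt τ) ystar) d t ∧ d < 0)
        ∧ ∃ d : ℝ, HasDerivAt (fun τ : ℝ => policy φ (θt τ) ymed) d t ∧ 0 < d)
    ∧ (∀ t ∈ Set.Icc (0 : ℝ) tγ, policy φ (θt tγ) ystar ≤ policy φ (θt t) ystar)
    ∧ policy φ (θt tγ) ystar
        ≤ policy φ (θt 0) ymed ^ 2 * γ / (8 * (rG ystar - expReward φ rG (θt 0))) := by
  classical
  haveI : Nonempty Y := ⟨ystar⟩
  have huniv : (Finset.univ : Finset Y) = insert ystar (insert ymed Ybad) := by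
    ext y
    simpa using hcover y
  have hsum : ∀ f : Y → ℝ, ∑ y, f y = f ystar + f ymed + ∑ y ∈ Ybad, f y := by
    intro f
    rw [huniv, Finset.sum_insert (by simp [hsm, hsb]), Finset.sum_insert hmb]
    ring
  have hrb : rG ybad ≤ 0 := hr3 ybad hybad
  have hd1 : 0 < Δ1 := by rw [hΔ1]; linarith
  have hd2 : 0 < Δ2 := by rw [hΔ2]; linarith
  have hrm1 : rG ymed ≤ 1 := (hrG ymed).2
  have hppos := aux_policy_pos φ
  have hone : ∀ t, policy φ (θt t) ystar + policy φ (θt t) ymed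
      + ∑ y ∈ Ybad, policy φ (θt t) y = 1 := by
    intro t
    rw [← hsum, aux_policy_sum]
  have hV : ∀ t, expReward φ rG (θt t) = policy φ (θt t) ystar * rG ystar
      + policy φ (θt t) ymed * rG ymed + (∑ y ∈ Ybad, policy φ (θt t) y) * rG ybad := by
    intro t
    rw [expReward, hsum, Finset.sum_mul]
    congr 1
    exact Finset.sum_congr rfl (fun y hy => by rw [hr4 y hy])
  have haV : ∀ t, rG ymed - expReward φ rG (θt t)
      = (∑ y ∈ Ybad, policy φ (θt t) y) * Δ2 - policy φ (θt t) ystar * Δ1 := by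
    intro t
    rw [hV, hΔ1, hΔ2]
    linear_combination (-rG ymed) * hone t
  have hstar : ∀ t, rG ystar - expReward φ rG (θt t)
      = (rG ymed - expReward φ rG (θt t)) + Δ1 := by
    intro t; rw [hΔ1]; ring
  have hSd : ∀ t, ∑ z, policy φ (θt t) z ^ 2 * (rG z - expReward φ rG (θt t))
      = policy φ (θt t) ystar ^ 2 * ((rG ymed - expReward φ rG (θt t)) + Δ1)
        + policy φ (θt t) ymed ^ 2 * (rG ymed - expReward φ rG (θt t))
        + (∑ y ∈ Ybad, policy φ (θt t) y ^ 2) * ((rG ymed - expReward φ rG (θt t)) - Δ2) := by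
    intro t
    rw [hsum, hstar, Finset.sum_mul]
    congr 1
    exact Finset.sum_congr rfl (fun y hy => by rw [hr4 y hy, hΔ2]; ring)
  have hder := fun t ht y => aux_policy_deriv φ horth rG θt t (hflow t ht) y
  -- constants
  have hp0 := hppos (θt 0) ystar
  have hMpos : 0 < M := by
    rw [hM]
    exact lt_min one_pos (by positivity)
  have hM1 : M ≤ 1 := by rw [hM]; exact min_le_left _ _
  have hMd : M * (Δ1 + Δ2) ≤ 0.05 := by
    have h : M ≤ 0.05 * rG ymed ^ ((2:ℝ)/7) / (Δ1 + Δ2) := by rw [hM]; exact min_le_right _ _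
    rw [le_div_iff₀ (by linarith)] at h
    have : rG ymed ^ ((2:ℝ)/7) ≤ 1 := Real.rpow_le_one hr2.le hrm1 (by norm_num)
    linarith
  set p0 := policy φ (θt 0) ystar with hp0def
  have hx : 0 < p0 / M := div_pos hp0 hMpos
  obtain ⟨g, hgdef⟩ : ∃ g, g = (p0 / M) ^ ((1:ℝ)/13) := ⟨_, rfl⟩
  have hg : 0 < g := by rw [hgdef]; positivity
  have hpw : ∀ n : ℕ, g ^ n = (p0 / M) ^ ((n:ℝ)/13) := by
    intro n
    rw [hgdef, ← Real.rpow_natCast, ← Real.rpow_mul hx.le]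
    congr 1; ring
  have hg14 : γ = g ^ 14 := by rw [hγ, hpw]; norm_num
  have hg13 : p0 / M = g ^ 13 := by rw [hpw]; norm_num
  have hg7 : p0 ^ ((7:ℝ)/13) / M ^ ((7:ℝ)/13) = g ^ 7 := by
    rw [hpw, Real.div_rpow hp0.le hMpos.le]; norm_num
  have hp0g : p0 = M * g ^ 13 := by rw [← hg13]; field_simp
  have hg1 : g < 0.75 := by
    obtain ⟨m, hm⟩ : ∃ m, m = min 0.01 (min ((21 / (1100 * (Δ1 + Δ2))) ^ ((7:ℝ)/3)) (Δ2 ^ 2)) :=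
      ⟨_, rfl⟩
    rw [← hm] at hinit1
    have hm0 : 0 ≤ m := by rw [hm]; positivity
    have hm1 : m ≤ 0.01 := by rw [hm]; exact min_le_left _ _
    have h1 : g ^ 13 < m ^ ((13:ℝ)/14) := by
      rw [hp0g] at hinit1
      exact lt_of_mul_lt_mul_left hinit1 hMpos.le
    have h2 : (g ^ 13) ^ 14 < (m ^ ((13:ℝ)/14)) ^ 14 :=
      pow_lt_pow_left₀ h1 (by positivity) (by norm_num)
    have h3 : (m ^ ((13:ℝ)/14)) ^ 14 = m ^ 13 := by
      rw [← Real.rpow_natCast, ← Real.rpow_mul hm0, ← Real.rpow_natCast]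
      norm_num
    rw [h3] at h2
    have h4 : m ^ 13 ≤ 0.01 ^ 13 := pow_le_pow_left₀ hm0 hm1 13
    by_contra hc
    have h5 : (0.75:ℝ) ^ 182 ≤ g ^ 182 := pow_le_pow_left₀ (by norm_num) (not_lt.1 hc) 182
    have h6 : (g ^ 13) ^ 14 = g ^ 182 := by rw [← pow_mul]
    rw [h6] at h2
    have : (0.01:ℝ) ^ 13 < 0.75 ^ 182 := by norm_num
    linarith
  have hB0 : 2 * g ^ 7 ≤ (∑ y ∈ Ybad, policy φ (θt 0) y) * Δ2 := by
    have h := (le_max_left _ _).trans hinit2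
    have hMp : 0 < M ^ ((7:ℝ)/13) := by positivity
    rw [← hg7]
    calc 2 * (p0 ^ ((7:ℝ)/13) / M ^ ((7:ℝ)/13))
        = 2 * p0 ^ ((7:ℝ)/13) / (Δ2 * M ^ ((7:ℝ)/13)) * Δ2 := by field_simp
      _ ≤ _ := mul_le_mul_of_nonneg_right h hd2.le
  have hcore := aux_core (fun t => policy φ (θt t) ystar) (fun t => policy φ (θt t) ymed)
    (fun t => ∑ y ∈ Ybad, policy φ (θt t) y) (fun t => ∑ y ∈ Ybad, policy φ (θt t) y ^ 2)
    Δ1 Δ2 M g tγ (fun t => hppos _ _)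
    (fun t => Finset.sum_pos (fun y _ => hppos _ _) ⟨ybad, hybad⟩)
    (fun t => Finset.sum_nonneg (fun y _ => sq_nonneg _))
    (fun t => Finset.sum_sq_le_sq_sum_of_nonneg (fun y _ => (hppos _ _).le))
    hone hd1 hd2 (fun t => rG ymed - expReward φ rG (θt t))
    (fun t => ∑ z, policy φ (θt t) z ^ 2 * (rG z - expReward φ rG (θt t)))
    haV hSd
    (fun t ht => (hder t ht ystar).congr_deriv (by rw [hstar]))
    (fun t ht => hder t ht ymed)
    (fun t ht => by
      refine (HasDerivAt.fun_sum (fun y (_ : y ∈ Ybad) => hder t ht y)).congr_deriv ?_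
      rw [Finset.sum_mul, Finset.sum_mul, ← Finset.sum_sub_distrib]
      refine Finset.sum_congr rfl (fun y hy => ?_)
      rw [hr4 y hy, hΔ2]; ring)
    hg hg1 hMpos hM1 hMd hp0g hB0 (by linarith) htγ0 (by rw [← hg14]; linarith)
    (fun t ht h => htγfirst t ht (by rw [hg14]; linarith))
  obtain ⟨c1, c2, c3⟩ := hcore
  refine ⟨fun t ht => ⟨⟨_, hder t ht.1 ystar, ?_⟩, ⟨_, hder t ht.1 ymed, (c1 t ht).2⟩⟩, c2, ?_⟩
  · rw [hstar]; exact (c1 t ht).1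
  · rw [hstar, hg14]; exact c3
end
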